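/- Let G = (V ∪ {s}, E) be a finite sandpile graph and W ⊆ V with the induced subgraph of G on (V ∪ {s}) \ W connected. Suppose ξ ∈ R_{G_W} is minimal in G_W. Then the entry points of ξ are pairwise non-adjacent in G: for distinct w_i, w_j ∈ E(ξ,W), b_{w_i w_j} = 0. -/

import Mathlib

open scoped Classical

namespace Sandpile

/-- A finite sandpile multigraph on vertex set `α` (which plays the role of `V ∪ {s}`),
given by a distinguished sink and symmetric edge multiplicities. -/
structure Graph (α : Type*) where
  sink : α
  b : α → α → ℕ

namespace Graph

variable {α : Type*} [Fintype α] [DecidableEq α] (G : Graph α)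

/-- The non-sink vertices (the set `V`). -/
def VSet : Finset α := Finset.univ.erase G.sink

/-- Degree restricted to a finite set of vertices: `deg_F(x) = ∑_{y ∈ F} b_{xy}`. -/
def degIn (F : Finset α) (x : α) : ℕ := ∑ y ∈ F, G.b x y

/-- Total degree `deg_G(x)`. -/
def deg (x : α) : ℕ := ∑ y, G.b x y

/-- `G` is a genuine finite sandpile graph: symmetric multiplicities, no loops, connected. -/
def IsSandpileGraph : Prop :=
  (∀ x y, G.b x y = G.b y x) ∧ (∀ x, G.b x x = 0) ∧
    ∀ x y : α, Relation.ReflTransGen (fun u v => 0 < G.b u v) x y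

/-- Connectivity of the subgraph induced on the vertex set `S`. -/
def ConnectedOn (S : Set α) : Prop :=
  ∀ x ∈ S, ∀ y ∈ S,
    Relation.ReflTransGen (fun u v => u ∈ S ∧ v ∈ S ∧ 0 < G.b u v) x y

/-- A sandpile is stable if every non-sink vertex carries fewer particles than its degree. -/
def Stable (η : α → ℕ) : Prop := ∀ x ∈ G.VSet, η x < G.deg x

/-- `η` is ample for `F` if some vertex of `F` has at least `deg_F` particles. -/
def AmpleFor (η : α → ℕ) (F : Finset α) : Prop := ∃ x ∈ F, G.degIn F x ≤ η x

/-- Dhar's burning test: recurrent = stable and ample for every nonempty `F ⊆ V`. -/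
def Recurrent (η : α → ℕ) : Prop :=
  G.Stable η ∧ ∀ F ⊆ G.VSet, F.Nonempty → G.AmpleFor η F

/-- Remove one particle at `w` (`η - δ_w`). -/
def SubOne (η : α → ℕ) (w : α) : α → ℕ := fun x => if x = w then η x - 1 else η x

/-- `η` and `ξ` agree on `W` (restriction `η_W = ξ_W`). -/
def EqOn (η ξ : α → ℕ) (W : Finset α) : Prop := ∀ x ∈ W, η x = ξ x

/-- `ξ` is (generalized) minimal on `W`: it extends to a recurrent sandpile, and no
recurrent extension stays recurrent after removing a particle from a vertex of `W`.
(`η - δ_w ∉ R_G` holds automatically if `η w = 0`, as then `η - δ_w` is not a configuration.) -/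
def Minimal (W : Finset α) (ξ : α → ℕ) : Prop :=
  (∃ η, G.Recurrent η ∧ EqOn η ξ W) ∧
    ∀ η, G.Recurrent η → EqOn η ξ W → ∀ w ∈ W, ¬(1 ≤ η w ∧ G.Recurrent (SubOne η w))

/-- `ν_G[P]`: the uniform probability of the event `P` under the uniform measure on
recurrent configurations (configurations are normalized to vanish at the sink). -/
noncomputable def prob (P : (α → ℕ) → Prop) : ℝ :=
  (Nat.card {η : α → ℕ // η G.sink = 0 ∧ G.Recurrent η ∧ P η} : ℝ) /
    (Nat.card {η : α → ℕ // η G.sink = 0 ∧ G.Recurrent η} : ℝ)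

/-- The graph Laplacian with the sink row and column deleted. -/
noncomputable def lapRed :
    Matrix {x : α // x ≠ G.sink} {x : α // x ≠ G.sink} ℝ :=
  Matrix.of fun x y =>
    if (x : α) = (y : α) then (G.deg ↑x : ℝ) else -(G.b ↑x ↑y : ℝ)

/-- `H = (Δ')⁻¹`, extended by `0` on the sink. -/
noncomputable def Hfun (x y : α) : ℝ :=
  if hx : x = G.sink then 0
  else if hy : y = G.sink then 0
  else (G.lapRed)⁻¹ ⟨x, hx⟩ ⟨y, hy⟩

/-- Oriented edges of the multigraph `G`: an edge from `p.1` to `p.2.1`, with copy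
index `p.2.2` (parallel edges are distinct). -/
abbrev OEdge (G : Graph α) : Type _ := {p : α × α × ℕ // p.2.2 < G.b p.1 p.2.1}

/-- `K_G(e,f) = δ_{ef} - Y_G(e,f)` where `Y_G` is the transfer current matrix. -/
noncomputable def Kmat (e f : G.OEdge) : ℝ :=
  (if e = f then 1 else 0) -
    (G.Hfun e.1.1 f.1.1 - G.Hfun e.1.1 f.1.2.1 - G.Hfun e.1.2.1 f.1.1 +
      G.Hfun e.1.2.1 f.1.2.1)

/-- Unburnt sets of phase one of the burning algorithm based on `Q`:
`U_0 = V`, `U_i = U_{i-1} \ B_i` with `B_i = {x ∈ U_{i-1} \ Q : η x ≥ deg_{U_{i-1}} x}`. -/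
def U1 (η : α → ℕ) (Q : Finset α) : ℕ → Finset α
  | 0 => G.VSet
  | i + 1 => (U1 η Q i).filter fun x => x ∈ Q ∨ η x < G.degIn (U1 η Q i) x

/-- The final unburnt set `U^{(1)}_I` of phase one (the sequence `U1` is decreasing,
hence stabilizes after at most `|α|` steps). -/
def U1lim (η : α → ℕ) (Q : Finset α) : Finset α := G.U1 η Q (Fintype.card α)

/-- Unburnt sets of phase two of the burning algorithm based on `Q`. -/
def U2 (η : α → ℕ) (Q : Finset α) : ℕ → Finset α
  | 0 => G.U1lim η Q
  | i + 1 => (U2 η Q i).filter fun x => η x < G.degIn (U2 η Q i) x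

/-- Recurrence in the wired graph `G_W` (note `deg_{G_W}(x) = deg_G(x)` for `x ∈ W`,
and `deg_F` for `F ⊆ W` is the same in `G_W` and `G`). -/
def WiredRecurrent (W : Finset α) (ξ : α → ℕ) : Prop :=
  (∀ x ∈ W, ξ x < G.deg x) ∧ ∀ F ⊆ W, F.Nonempty → ∃ x ∈ F, G.degIn F x ≤ ξ x

/-- `ξ` is minimal in the wired graph `G_W`. -/
def WiredMinimal (W : Finset α) (ξ : α → ℕ) : Prop :=
  G.WiredRecurrent W ξ ∧ ∀ w ∈ W, ¬(1 ≤ ξ w ∧ G.WiredRecurrent W (SubOne ξ w))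

/-- Entry points `E(ξ,W)` of `ξ ∈ R_{G_W}`: vertices burnable at the first step. -/
def entryPoints (W : Finset α) (ξ : α → ℕ) : Finset α :=
  W.filter fun w => G.degIn W w ≤ ξ w

/-- `x` is burnable given the burnt set `S`: `η(x) ≥ deg_G(x) − ∑_{y ∈ S} b_{xy}`. -/
def Burnable (η : α → ℕ) (S : Finset α) (x : α) : Prop :=
  G.degIn (Finset.univ \ S) x ≤ η x

/-- A burning sequence starting from the burnt set `S`. -/
def IsBurnSeq (η : α → ℕ) : Finset α → List α → Prop
  | _, [] => True
  | S, x :: l => x ∉ S ∧ G.Burnable η S x ∧ IsBurnSeq η (insert x S) l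

/-- `B` is a burnt set for `η`: some burning sequence from `{s}` burns exactly `B`. -/
def IsBurntSet (η : α → ℕ) (B : Finset α) : Prop :=
  ∃ l : List α, G.IsBurnSeq η {G.sink} l ∧ l.toFinset = B

/-- Reachability within the vertex set `S`. -/
def ReachIn (S : Set α) (x y : α) : Prop :=
  Relation.ReflTransGen (fun u v => u ∈ S ∧ v ∈ S ∧ 0 < G.b u v) x y

/-- `C` is a connected component of the subgraph induced on `(V ∪ {s}) \ W`
that does not contain the sink. -/
def IsHoleComp (W C : Finset α) : Prop :=
  C.Nonempty ∧ G.sink ∉ C ∧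
    ∀ x ∈ C, ∀ y : α, y ∈ C ↔ y ∉ W ∧ G.ReachIn {a : α | a ∉ W} x y

/-- Adjacency induced by a finite set `t` of (undirected, indexed) edges. -/
def edgeRel (t : Finset (Sym2 α × ℕ)) (u v : α) : Prop := ∃ k : ℕ, (s(u, v), k) ∈ t

/-- `t` is a spanning tree of the multigraph `G`: it consists of edges of `G`
(parallel edges distinct), it spans (connected), and every edge is a bridge
(equivalently, it is acyclic). -/
def IsSpanningTree (t : Finset (Sym2 α × ℕ)) : Prop :=
  (∀ p ∈ t, ∃ x y : α, p.1 = s(x, y) ∧ p.2 < G.b x y) ∧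
  (∀ u v : α, Relation.ReflTransGen (edgeRel t) u v) ∧
  ∀ p ∈ t, ∀ x y : α, p.1 = s(x, y) →
    ¬ Relation.ReflTransGen (edgeRel (t.erase p)) x y

/-- Adjacency induced by a set of (undirected, indexed) edges. -/
def edgeRelSet (t : Set (Sym2 α × ℕ)) (u v : α) : Prop := ∃ k : ℕ, (s(u, v), k) ∈ t

/-- Set version of `IsSpanningTree`. -/
def IsSpanningTreeSet (t : Set (Sym2 α × ℕ)) : Prop :=
  (∀ p ∈ t, ∃ x y : α, p.1 = s(x, y) ∧ p.2 < G.b x y) ∧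
  (∀ u v : α, Relation.ReflTransGen (edgeRelSet t) u v) ∧
  ∀ p ∈ t, ∀ x y : α, p.1 = s(x, y) →
    ¬ Relation.ReflTransGen (edgeRelSet (t \ {p})) x y

/-- The step at which `x` burns in phase one (0 for the sink; `sInf ∅ = 0` if `x`
never burns in phase one). -/
noncomputable def p1time (η : α → ℕ) (Q : Finset α) (x : α) : ℕ :=
  sInf {i : ℕ | x ∉ G.U1 η Q i}

/-- The step at which `x` burns in phase two. -/
noncomputable def p2time (η : α → ℕ) (Q : Finset α) (x : α) : ℕ :=
  sInf {i : ℕ | x ∉ G.U2 η Q i}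

/-- Vertices burnt at step `i` of phase one (`B^{(1)}_0 = {s}`). -/
def B1 (η : α → ℕ) (Q : Finset α) : ℕ → Finset α
  | 0 => {G.sink}
  | i + 1 => G.U1 η Q i \ G.U1 η Q (i + 1)

/-- Vertices burnt at step `i` of phase two (`B^{(2)}_0` = everything burnt in phase
one, including the sink). -/
def B2 (η : α → ℕ) (Q : Finset α) : ℕ → Finset α
  | 0 => Finset.univ \ G.U1lim η Q
  | i + 1 => G.U2 η Q i \ G.U2 η Q (i + 1)

/-- The set `B^{(p)}_{i-1}` of vertices burnt at the step preceding the step at which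
`x` burns (in the appropriate phase). -/
noncomputable def prevBurnt (η : α → ℕ) (Q : Finset α) (x : α) : Finset α :=
  if x ∈ G.U1lim η Q then G.B2 η Q (G.p2time η Q x - 1)
  else G.B1 η Q (G.p1time η Q x - 1)

/-- The set `D = B^{(p)}_0 ∪ ⋯ ∪ B^{(p)}_{i-1}` of vertices burnt strictly before `x`
in the phase in which `x` burns. -/
noncomputable def burntBefore (η : α → ℕ) (Q : Finset α) (x : α) : Finset α :=
  if x ∈ G.U1lim η Q then Finset.univ \ G.U2 η Q (G.p2time η Q x - 1)
  else Finset.univ \ G.U1 η Q (G.p1time η Q x - 1)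

/-- `j = η(x) − deg_G(x) + n_x` with `n_x = ∑_{y ∈ D} b_{xy}`. -/
noncomputable def jX (η : α → ℕ) (Q : Finset α) (x : α) : ℕ :=
  η x + G.degIn (G.burntBefore η Q x) x - G.deg x

/-- The defining property of the edge `e_x` of the burning bijection based on `Q`:
`e_x` has tail `x`, head burnt at the previous step, and exactly `j` smaller elements
of `P_x` under the given edge order `lt x`. -/
def EdgeSpec (lt : α → G.OEdge → G.OEdge → Prop) (η : α → ℕ) (Q : Finset α)
    (x : α) (e : G.OEdge) : Prop :=
  e.1.1 = x ∧ e.1.2.1 ∈ G.prevBurnt η Q x ∧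
    {f : G.OEdge | f.1.1 = x ∧ f.1.2.1 ∈ G.prevBurnt η Q x ∧ lt x f e}.ncard =
      G.jX η Q x

/-- The (oriented) spanning tree `t(η) = {e_x : x ∈ V}` assigned to `η` by the
burning bijection based on `Q`. -/
def treeOf (lt : α → G.OEdge → G.OEdge → Prop) (η : α → ℕ) (Q : Finset α) :
    Set G.OEdge :=
  {e | ∃ x ∈ G.VSet, G.EdgeSpec lt η Q x e}

/-- Forget the orientation of an oriented edge. -/
def undir (e : G.OEdge) : Sym2 α × ℕ := (s(e.1.1, e.1.2.1), e.1.2.2)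

/-- Total burning order: phase-one vertices first (at their phase-one step), then
phase-two vertices. -/
noncomputable def burnOrder (η : α → ℕ) (Q : Finset α) (x : α) : ℕ :=
  if x ∈ G.U1lim η Q then Fintype.card α + 1 + G.p2time η Q x else G.p1time η Q x

/-- Edge multiplicities of the auxiliary graph `G_W^*` (on vertex set `W ∪ {s}`):
`b*_{xy} = b_{xy}` for `x,y ∈ W`; `b*_{xs} = ∑_{z ∉ W} b_{xz}` for `x ∈ Q` and
`b*_{xs} = 0` for `x ∈ W \ Q`. -/
def bstar (Q W : Finset α) (x y : α) : ℕ :=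
  if x ∈ W ∧ y ∈ W then G.b x y
  else if x ∈ W ∧ y = G.sink then
    if x ∈ Q then ∑ z ∈ Finset.univ \ W, G.b x z else 0
  else if y ∈ W ∧ x = G.sink then
    if y ∈ Q then ∑ z ∈ Finset.univ \ W, G.b z y else 0
  else 0

/-- Recurrence in the auxiliary graph `G_W^*`. -/
def StarRecurrent (Q W : Finset α) (ζ : α → ℕ) : Prop :=
  (∀ x ∈ W, ζ x < ∑ y ∈ insert G.sink W, G.bstar Q W x y) ∧
    ∀ F ⊆ W, F.Nonempty → ∃ x ∈ F, (∑ y ∈ F, G.bstar Q W x y) ≤ ζ x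

end Graph

end Sandpile

open Sandpile

/-!
Burn an entry point `w₂` first: what remains is recurrence on `W \ {w₂}`. If `w₁` is another entry
point and is adjacent to `w₂`, burning `w₂` leaves `w₁` with strictly more particles than it needs
to burn, so one particle can be removed at `w₁` without spoiling recurrence. Since `w₂ ≠ w₁` keeps
all its particles, it can still be burnt first, so `ξ - δ_{w₁}` is recurrent, against minimality.
-/

namespace Sandpile.Graph

variable {α : Type*} {G : Graph α} {F W : Finset α} {ξ : α → ℕ} {v w : α}

lemma degIn_mono (h : F ⊆ W) (x : α) : G.degIn F x ≤ G.degIn W x :=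
  Finset.sum_le_sum_of_subset h

lemma subOne_of_ne [DecidableEq α] (h : v ≠ w) : SubOne ξ w v = ξ v :=
  if_neg h

lemma subOne_self [DecidableEq α] : SubOne ξ w w = ξ w - 1 :=
  if_pos rfl

lemma subOne_le [DecidableEq α] (x : α) : SubOne ξ w x ≤ ξ x := by
  unfold SubOne
  split_ifs <;> omega

lemma degIn_erase_lt [DecidableEq α] (hv : v ∈ W) (hb : 0 < G.b w v) :
    G.degIn (W.erase v) w < G.degIn W w :=
  Finset.sum_erase_lt_of_pos hv hb

lemma mem_entryPoints : v ∈ G.entryPoints W ξ ↔ v ∈ W ∧ G.degIn W v ≤ ξ v :=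
  Finset.mem_filter

lemma mem_entryPoints_subOne [DecidableEq α] (hv : v ∈ G.entryPoints W ξ) (h : v ≠ w) :
    v ∈ G.entryPoints W (SubOne ξ w) := by
  rwa [mem_entryPoints, subOne_of_ne h, ← mem_entryPoints]

namespace WiredRecurrent

variable [Fintype α]

lemma mono (hξ : G.WiredRecurrent W ξ) (h : F ⊆ W) : G.WiredRecurrent F ξ :=
  ⟨fun x hx ↦ hξ.1 x (h hx), fun F' hF' ↦ hξ.2 F' (hF'.trans h)⟩

variable [DecidableEq α]

lemma of_erase (hξ : G.WiredRecurrent (W.erase v) ξ) (hv : v ∈ G.entryPoints W ξ)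
    (hdeg : ξ v < G.deg v) : G.WiredRecurrent W ξ := by
  refine ⟨fun x hx ↦ ?_, fun F hF hne ↦ ?_⟩
  · obtain rfl | hxv := eq_or_ne x v
    · exact hdeg
    · exact hξ.1 x (Finset.mem_erase.2 ⟨hxv, hx⟩)
  · by_cases hvF : v ∈ F
    · exact ⟨v, hvF, (degIn_mono hF v).trans (mem_entryPoints.1 hv).2⟩
    · exact hξ.2 F (Finset.subset_erase.2 ⟨hF, hvF⟩) hne

lemma subOne (hξ : G.WiredRecurrent W ξ) (hw : G.degIn W w < ξ w) :
    G.WiredRecurrent W (SubOne ξ w) := by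
  refine ⟨fun x hx ↦ (subOne_le x).trans_lt (hξ.1 x hx), fun F hF hne ↦ ?_⟩
  obtain ⟨x, hxF, hx⟩ := hξ.2 F hF hne
  refine ⟨x, hxF, ?_⟩
  obtain rfl | hxw := eq_or_ne x w
  · rw [subOne_self]
    exact Nat.le_sub_one_of_lt ((degIn_mono hF x).trans_lt hw)
  · rwa [subOne_of_ne hxw]

lemma subOne_of_adj_entryPoints (hξ : G.WiredRecurrent W ξ) (hw : w ∈ G.entryPoints W ξ)
    (hv : v ∈ G.entryPoints W ξ) (hvw : v ≠ w) (hb : 0 < G.b w v) :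
    G.WiredRecurrent W (SubOne ξ w) := by
  have hvW : v ∈ W := (mem_entryPoints.1 hv).1
  have hlt : G.degIn (W.erase v) w < ξ w :=
    (degIn_erase_lt hvW hb).trans_le (mem_entryPoints.1 hw).2
  have herase : G.WiredRecurrent (W.erase v) (SubOne ξ w) :=
    (hξ.mono (W.erase_subset v)).subOne hlt
  exact herase.of_erase (mem_entryPoints_subOne hv hvw) ((subOne_le v).trans_lt (hξ.1 v hvW))

end WiredRecurrent

end Sandpile.Graph

open Sandpile.Graph in
theorem statement_6_general {α : Type*} [Fintype α] [DecidableEq α] (G : Sandpile.Graph α)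
    (W : Finset α) (ξ : α → ℕ) (hmin : G.WiredMinimal W ξ) :
    ∀ w₁ ∈ G.entryPoints W ξ, ∀ w₂ ∈ G.entryPoints W ξ, w₁ ≠ w₂ → G.b w₁ w₂ = 0 := by
  intro w₁ h₁ w₂ h₂ hne
  by_contra hb
  have hb_pos : 0 < G.b w₁ w₂ := Nat.pos_of_ne_zero hb
  obtain ⟨h₁W, h₁deg⟩ := mem_entryPoints.1 h₁
  have hdeg_pos : 0 < G.degIn W w₁ :=
    (Nat.zero_le _).trans_lt (degIn_erase_lt (mem_entryPoints.1 h₂).1 hb_pos)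
  exact hmin.2 w₁ h₁W
    ⟨hdeg_pos.trans_le h₁deg, hmin.1.subOne_of_adj_entryPoints h₁ h₂ hne.symm hb_pos⟩

/-- Lemma 2 (i). The entry points of a minimal configuration in the
wired graph `G_W` are pairwise non-adjacent in `G`. -/
theorem statement_6 {α : Type*} [Fintype α] [DecidableEq α] (G : Sandpile.Graph α)
    (hG : G.IsSandpileGraph) (W : Finset α) (hWs : G.sink ∉ W)
    (hconn : G.ConnectedOn {x : α | x ∉ W}) (ξ : α → ℕ)
    (hmin : G.WiredMinimal W ξ) :
    ∀ w₁ ∈ G.entryPoints W ξ, ∀ w₂ ∈ G.entryPoints W ξ, w₁ ≠ w₂ → G.b w₁ w₂ = 0 :=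
  statement_6_general G W ξ hmin
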